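/- Let B₀, σ, l, R₀, γ be real numbers and c₀ ≠ 0. Define on ℝ² (writing r² = x₁² + x₂²): u₁(x) = B₀σ x₂ e^(−σr²/2), u₂(x) = −B₀σ x₁ e^(−σr²/2), and Π(x) = −(1/(2c₀))·(B₀²σ e^(−σr²) − 2lB₀ e^(−σr²/2)) + R₀. Then (u₁, u₂, Π) is a stationary solution of the 2D rotating compressible system: for all x ∈ ℝ², u₁∂₁u₁ + u₂∂₂u₁ − l u₂ + c₀ ∂₁Π = 0, u₁∂₁u₂ + u₂∂₂u₂ + l u₁ + c₀ ∂₂Π = 0, and u₁∂₁Π + u₂∂₂Π + (γ−1)·Π·(∂₁u₁ + ∂₂u₂) = 0. -/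

import Mathlib

namespace Stmt16

/-- Velocity component `u₁` of the exponentially localized vortex. -/
noncomputable def u₁ (B₀ σ : ℝ) (x y : ℝ) : ℝ :=
  B₀ * σ * y * Real.exp (-(σ * (x ^ 2 + y ^ 2)) / 2)

/-- Velocity component `u₂` of the exponentially localized vortex. -/
noncomputable def u₂ (B₀ σ : ℝ) (x y : ℝ) : ℝ :=
  -(B₀ * σ * x * Real.exp (-(σ * (x ^ 2 + y ^ 2)) / 2))

/-- Pressure variable `Π` of the exponentially localized vortex. -/
noncomputable def Pi' (B₀ σ l c₀ R₀ : ℝ) (x y : ℝ) : ℝ :=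
  -(1 / (2 * c₀)) * (B₀ ^ 2 * σ * Real.exp (-(σ * (x ^ 2 + y ^ 2))) -
    2 * l * B₀ * Real.exp (-(σ * (x ^ 2 + y ^ 2)) / 2)) + R₀

/-! A swirl `U = ω(r²) (x₂, -x₁)` is divergence free and orthogonal to the gradient of every radial
pressure, so the pressure equation holds whatever the profiles are. Its acceleration is centripetal,
`(U·∇)U = -ω² x`, and its Coriolis term `l L·U = l ω x` is radial as well, so the momentum
equations reduce to the single scalar balance `2 c₀ p'(q) = ω(q) (ω(q) - l)` in `q = r²`. For
`ω(q) = B₀ σ e^(-σq/2)` this integrates to the stated `Π`. -/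

section Radial

variable {E : Type*} {x y : ℝ}

/-- The radial function on the plane with profile `f`. The profile is a function of the squared
radius, so that no smoothness is lost at the origin. -/
def radial (f : ℝ → E) (x y : ℝ) : E :=
  f (x ^ 2 + y ^ 2)

theorem radial_comm (f : ℝ → E) (x y : ℝ) : radial f x y = radial f y x :=
  congrArg f (add_comm _ _)

variable [NormedAddCommGroup E] [NormedSpace ℝ E] {f : ℝ → E} {f' : E}

theorem hasDerivAt_radial_fst (hf : HasDerivAt f f' (x ^ 2 + y ^ 2)) :
    HasDerivAt (fun s => radial f s y) ((2 * x) • f') x := by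
  have hsq : HasDerivAt (fun s : ℝ => s ^ 2 + y ^ 2) (2 * x) x := by
    simpa using (hasDerivAt_pow 2 x).add_const (y ^ 2)
  exact hf.scomp x hsq

theorem hasDerivAt_radial_snd (hf : HasDerivAt f f' (x ^ 2 + y ^ 2)) :
    HasDerivAt (fun s => radial f x s) ((2 * y) • f') y := by
  rw [add_comm] at hf
  simpa only [radial_comm f x] using hasDerivAt_radial_fst hf

end Radial

section Swirl

variable {ω p : ℝ → ℝ} {ω' p' l c₀ x y : ℝ}

/-- First velocity component of the circular flow that turns clockwise with angular velocity `ω`,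
given as a function of the squared radius. -/
def swirl₁ (ω : ℝ → ℝ) (x y : ℝ) : ℝ :=
  y * radial ω x y

/-- Second velocity component of the circular flow that turns clockwise with angular velocity `ω`,
given as a function of the squared radius. -/
def swirl₂ (ω : ℝ → ℝ) (x y : ℝ) : ℝ :=
  -(x * radial ω x y)

theorem swirl₂_eq_neg_swirl₁_swap (ω : ℝ → ℝ) (x y : ℝ) : swirl₂ ω x y = -swirl₁ ω y x := by
  rw [swirl₂, swirl₁, radial_comm]

theorem hasDerivAt_swirl₁_fst (hω : HasDerivAt ω ω' (x ^ 2 + y ^ 2)) :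
    HasDerivAt (fun s => swirl₁ ω s y) (2 * x * y * ω') x := by
  refine ((hasDerivAt_radial_fst hω).const_mul y).congr_deriv ?_
  rw [smul_eq_mul]
  ring

theorem hasDerivAt_swirl₁_snd (hω : HasDerivAt ω ω' (x ^ 2 + y ^ 2)) :
    HasDerivAt (fun s => swirl₁ ω x s) (radial ω x y + 2 * y ^ 2 * ω') y := by
  refine ((hasDerivAt_id' y).fun_mul (hasDerivAt_radial_snd hω)).congr_deriv ?_
  rw [smul_eq_mul]
  ring

theorem hasDerivAt_swirl₂_fst (hω : HasDerivAt ω ω' (x ^ 2 + y ^ 2)) :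
    HasDerivAt (fun s => swirl₂ ω s y) (-(radial ω x y + 2 * x ^ 2 * ω')) x := by
  rw [add_comm] at hω
  simpa only [swirl₂_eq_neg_swirl₁_swap, radial_comm ω x] using (hasDerivAt_swirl₁_snd hω).fun_neg

theorem hasDerivAt_swirl₂_snd (hω : HasDerivAt ω ω' (x ^ 2 + y ^ 2)) :
    HasDerivAt (fun s => swirl₂ ω x s) (-(2 * y * x * ω')) y := by
  rw [add_comm] at hω
  simpa only [swirl₂_eq_neg_swirl₁_swap] using (hasDerivAt_swirl₁_fst hω).fun_neg

theorem swirl_advection_swirl₁ (hω : DifferentiableAt ℝ ω (x ^ 2 + y ^ 2)) :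
    swirl₁ ω x y * deriv (fun s => swirl₁ ω s y) x +
      swirl₂ ω x y * deriv (fun s => swirl₁ ω x s) y = -(x * radial ω x y ^ 2) := by
  rw [(hasDerivAt_swirl₁_fst hω.hasDerivAt).deriv, (hasDerivAt_swirl₁_snd hω.hasDerivAt).deriv,
    swirl₁, swirl₂]
  ring

theorem swirl_advection_swirl₂ (hω : DifferentiableAt ℝ ω (x ^ 2 + y ^ 2)) :
    swirl₁ ω x y * deriv (fun s => swirl₂ ω s y) x +
      swirl₂ ω x y * deriv (fun s => swirl₂ ω x s) y = -(y * radial ω x y ^ 2) := by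
  rw [(hasDerivAt_swirl₂_fst hω.hasDerivAt).deriv, (hasDerivAt_swirl₂_snd hω.hasDerivAt).deriv,
    swirl₁, swirl₂]
  ring

theorem swirl_advection_radial (ω : ℝ → ℝ) (hp : DifferentiableAt ℝ p (x ^ 2 + y ^ 2)) :
    swirl₁ ω x y * deriv (fun s => radial p s y) x +
      swirl₂ ω x y * deriv (fun s => radial p x s) y = 0 := by
  rw [(hasDerivAt_radial_fst hp.hasDerivAt).deriv, (hasDerivAt_radial_snd hp.hasDerivAt).deriv,
    swirl₁, swirl₂, smul_eq_mul, smul_eq_mul]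
  ring

theorem swirl_divergence_eq_zero (hω : DifferentiableAt ℝ ω (x ^ 2 + y ^ 2)) :
    deriv (fun s => swirl₁ ω s y) x + deriv (fun s => swirl₂ ω x s) y = 0 := by
  rw [(hasDerivAt_swirl₁_fst hω.hasDerivAt).deriv, (hasDerivAt_swirl₂_snd hω.hasDerivAt).deriv]
  ring

/-- The stationary 2D rotating compressible system at the point `(x, y)`, for the velocity `(u, v)`
and the pressure variable `P`: the two momentum equations and the pressure equation. -/
def IsStationaryAt (l c₀ γ : ℝ) (u v P : ℝ → ℝ → ℝ) (x y : ℝ) : Prop :=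
  u x y * deriv (fun s => u s y) x + v x y * deriv (fun s => u x s) y - l * v x y +
      c₀ * deriv (fun s => P s y) x = 0 ∧
    u x y * deriv (fun s => v s y) x + v x y * deriv (fun s => v x s) y + l * u x y +
      c₀ * deriv (fun s => P x s) y = 0 ∧
    u x y * deriv (fun s => P s y) x + v x y * deriv (fun s => P x s) y +
      (γ - 1) * P x y * (deriv (fun s => u s y) x + deriv (fun s => v x s) y) = 0

theorem isStationaryAt_swirl_of_balance (γ : ℝ) (hω : DifferentiableAt ℝ ω (x ^ 2 + y ^ 2))
    (hp : HasDerivAt p p' (x ^ 2 + y ^ 2))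
    (balance : 2 * c₀ * p' = radial ω x y * (radial ω x y - l)) :
    IsStationaryAt l c₀ γ (swirl₁ ω) (swirl₂ ω) (radial p) x y := by
  refine ⟨?_, ?_, ?_⟩
  · rw [swirl_advection_swirl₁ hω, (hasDerivAt_radial_fst hp).deriv, swirl₂, smul_eq_mul]
    linear_combination x * balance
  · rw [swirl_advection_swirl₂ hω, (hasDerivAt_radial_snd hp).deriv, swirl₁, smul_eq_mul]
    linear_combination y * balance
  · rw [swirl_advection_radial ω hp.differentiableAt, swirl_divergence_eq_zero hω, mul_zero,
      add_zero]

end Swirl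

section ExponentialVortex

/-- Angular velocity of the exponentially localized vortex at squared radius `q`. -/
noncomputable def vortexAngularVelocity (B₀ σ q : ℝ) : ℝ :=
  B₀ * σ * Real.exp (-(σ * q) / 2)

/-- Pressure variable of the exponentially localized vortex at squared radius `q`. -/
noncomputable def vortexPressure (B₀ σ l c₀ R₀ q : ℝ) : ℝ :=
  -(1 / (2 * c₀)) * (B₀ ^ 2 * σ * Real.exp (-(σ * q)) -
    2 * l * B₀ * Real.exp (-(σ * q) / 2)) + R₀

theorem u₁_eq_swirl₁ (B₀ σ : ℝ) : u₁ B₀ σ = swirl₁ (vortexAngularVelocity B₀ σ) := by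
  funext x y
  rw [u₁, swirl₁, radial, vortexAngularVelocity]
  ring

theorem u₂_eq_swirl₂ (B₀ σ : ℝ) : u₂ B₀ σ = swirl₂ (vortexAngularVelocity B₀ σ) := by
  funext x y
  rw [u₂, swirl₂, radial, vortexAngularVelocity]
  ring

theorem Pi'_eq_radial (B₀ σ l c₀ R₀ : ℝ) :
    Pi' B₀ σ l c₀ R₀ = radial (vortexPressure B₀ σ l c₀ R₀) :=
  rfl

theorem differentiable_vortexAngularVelocity (B₀ σ : ℝ) :
    Differentiable ℝ (vortexAngularVelocity B₀ σ) := by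
  unfold vortexAngularVelocity
  fun_prop

theorem vortexAngularVelocity_sq (B₀ σ q : ℝ) :
    vortexAngularVelocity B₀ σ q ^ 2 = (B₀ * σ) ^ 2 * Real.exp (-(σ * q)) := by
  rw [vortexAngularVelocity, mul_pow, ← Real.exp_nat_mul, Nat.cast_ofNat,
    mul_div_cancel₀ _ (two_ne_zero' ℝ)]

theorem hasDerivAt_vortexPressure (B₀ σ l c₀ R₀ q : ℝ) :
    HasDerivAt (vortexPressure B₀ σ l c₀ R₀)
      (vortexAngularVelocity B₀ σ q * (vortexAngularVelocity B₀ σ q - l) / (2 * c₀)) q := by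
  have hlin : HasDerivAt (fun r => -(σ * r)) (-σ) q := (hasDerivAt_const_mul σ).fun_neg
  have hderiv := ((hlin.exp.const_mul (B₀ ^ 2 * σ)).fun_sub
    ((hlin.div_const 2).exp.const_mul (2 * l * B₀))).const_mul (-(1 / (2 * c₀))) |>.add_const R₀
  refine hderiv.congr_deriv ?_
  have hsq := vortexAngularVelocity_sq B₀ σ q
  rw [vortexAngularVelocity] at hsq ⊢
  linear_combination -hsq / (2 * c₀)

end ExponentialVortex

/-- The exponentially decaying vortex
`u₁ = B₀σ x₂ e^(−σr²/2)`, `u₂ = −B₀σ x₁ e^(−σr²/2)`,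
`Π = −(1/(2c₀))(B₀²σ e^(−σr²) − 2lB₀ e^(−σr²/2)) + R₀`
is a stationary solution of the 2D rotating compressible system. -/
theorem stmt_16 (B₀ σ l R₀ γ c₀ : ℝ) (hc₀ : c₀ ≠ 0) :
    ∀ x y : ℝ,
      u₁ B₀ σ x y * deriv (fun s => u₁ B₀ σ s y) x +
        u₂ B₀ σ x y * deriv (fun s => u₁ B₀ σ x s) y -
        l * u₂ B₀ σ x y + c₀ * deriv (fun s => Pi' B₀ σ l c₀ R₀ s y) x = 0 ∧
      u₁ B₀ σ x y * deriv (fun s => u₂ B₀ σ s y) x +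
        u₂ B₀ σ x y * deriv (fun s => u₂ B₀ σ x s) y +
        l * u₁ B₀ σ x y + c₀ * deriv (fun s => Pi' B₀ σ l c₀ R₀ x s) y = 0 ∧
      u₁ B₀ σ x y * deriv (fun s => Pi' B₀ σ l c₀ R₀ s y) x +
        u₂ B₀ σ x y * deriv (fun s => Pi' B₀ σ l c₀ R₀ x s) y +
        (γ - 1) * Pi' B₀ σ l c₀ R₀ x y *
          (deriv (fun s => u₁ B₀ σ s y) x + deriv (fun s => u₂ B₀ σ x s) y) = 0 := by
  intro x y
  have h2c₀ : 2 * c₀ ≠ 0 := mul_ne_zero two_ne_zero hc₀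
  rw [u₁_eq_swirl₁, u₂_eq_swirl₂, Pi'_eq_radial]
  exact isStationaryAt_swirl_of_balance γ (differentiable_vortexAngularVelocity B₀ σ _)
    (hasDerivAt_vortexPressure B₀ σ l c₀ R₀ _) (mul_div_cancel₀ _ h2c₀)

end Stmt16
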